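/- Let γ > 0, let T ∈ (0,∞), and let u be a periodic classical solution of the Ostrovsky–Hunter equation on [0,T) with initial data u₀ satisfying ∫₀¹ u₀(x) dx = 0, which is in addition three times continuously differentiable in x, and suppose that lim_{t↑T} inf_{x∈ℝ} u_x(t,x) = −∞. Then the blow-up rate satisfies lim_{t↑T} ( (T−t) · inf_{x∈ℝ} u_x(t,x) ) = −1. -/

import Mathlib

open MeasureTheory Filter Set intervalIntegral

/-- A periodic (period `1` in `x`) classical solution of the Ostrovsky–Hunter
equation `(u_t + u u_x)_x = γ u` on the set `S` of times (typically `[0,T)`):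
`u` is `1`-periodic in `x`, continuously differentiable in `t`, twice
continuously differentiable in `x`, with `u_tx` continuous, and the expanded
equation `u_tx + u_x² + u u_xx = γ u` holds pointwise at positive times of `S`. -/
structure IsPeriodicOHSolution (γ : ℝ) (S : Set ℝ) (u : ℝ → ℝ → ℝ) : Prop where
  periodic : ∀ t ∈ S, ∀ x : ℝ, u t (x + 1) = u t x
  diff_t : ∀ t ∈ S, ∀ x : ℝ, DifferentiableAt ℝ (fun s => u s x) t
  diff_x : ∀ t ∈ S, ∀ x : ℝ, DifferentiableAt ℝ (u t) x
  diff_xx : ∀ t ∈ S, ∀ x : ℝ, DifferentiableAt ℝ (deriv (u t)) x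
  diff_tx : ∀ t ∈ S, ∀ x : ℝ, DifferentiableAt ℝ (fun y => deriv (fun s => u s y) t) x
  cont_u : ContinuousOn (fun p : ℝ × ℝ => u p.1 p.2) (S ×ˢ (Set.univ : Set ℝ))
  cont_ut : ContinuousOn (fun p : ℝ × ℝ => deriv (fun s => u s p.2) p.1)
      (S ×ˢ (Set.univ : Set ℝ))
  cont_ux : ContinuousOn (fun p : ℝ × ℝ => deriv (u p.1) p.2) (S ×ˢ (Set.univ : Set ℝ))
  cont_uxx : ContinuousOn (fun p : ℝ × ℝ => deriv (deriv (u p.1)) p.2)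
      (S ×ˢ (Set.univ : Set ℝ))
  cont_utx : ContinuousOn (fun p : ℝ × ℝ => deriv (fun y => deriv (fun s => u s y) p.1) p.2)
      (S ×ˢ (Set.univ : Set ℝ))
  eqn : ∀ t ∈ S, 0 < t → ∀ x : ℝ,
    deriv (fun y => deriv (fun s => u s y) t) x
      + (deriv (u t) x) ^ 2 + u t x * deriv (deriv (u t)) x = γ * u t x

open Topology

/-!
At a spatial minimum of `v = u_x` the term `u u_xx` vanishes, so `v_t = -v² + γ u` there. If `u` is
bounded up to time `T`, then `min v` is a Riccati solution up to a bounded error, and once `v²` is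
large it is trapped between the barriers `-1 / (k (T - t))` with `k` slightly above and slightly
below `1`.

The bound on `u` comes from `m = u_t + u u_x`, which is periodic with `m_x = γ u`. If `γ ≠ 0`, then
`u` has mean zero, hence so does `m`, and therefore `|m| ≤ |γ| max |u|`. At a spatial maximum of
`|u|` either `u` or `u_x` vanishes, so there `|u_t| = |m|`, and `max |u|` grows at most
exponentially.
-/

section Calculus

variable {𝕜 E P : Type*} [RCLike 𝕜] [NormedAddCommGroup E] [NormedSpace 𝕜 E] [TopologicalSpace P]

theorem tendstoUniformlyOnFilter_slope {f f' : P → 𝕜 → E} {p₀ : P} {x : 𝕜}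
    (hf : ∀ᶠ q in 𝓝 p₀ ×ˢ 𝓝 x, HasDerivAt (f q.1) (f' q.1 q.2) q.2)
    (hf' : ContinuousAt (fun q : P × 𝕜 => f' q.1 q.2) (p₀, x)) :
    TendstoUniformlyOnFilter (fun y p => slope (f p) x y) (fun p => f' p x) (𝓝[≠] x) (𝓝 p₀) := by
  rw [Metric.tendstoUniformlyOnFilter_iff]
  intro ε hε
  have hclose : ∀ᶠ q in 𝓝 p₀ ×ˢ 𝓝 x, dist (f' q.1 q.2) (f' p₀ x) < ε / 4 := by
    rw [← nhds_prod_eq]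
    exact hf'.eventually (Metric.ball_mem_nhds _ (by positivity))
  obtain ⟨U, hU, V, hV, hUV⟩ := eventually_prod_iff.1 (hf.and hclose)
  obtain ⟨δ, hδ, hball⟩ := Metric.eventually_nhds_iff_ball.1 hV
  have hy_mem : ∀ᶠ y in 𝓝[≠] x, y ∈ Metric.ball x δ ∧ y ≠ x :=
    (eventually_nhdsWithin_of_eventually_nhds (Metric.ball_mem_nhds x hδ)).and
      self_mem_nhdsWithin
  filter_upwards [hy_mem.prod_mk hU] with ⟨y, p⟩ ⟨⟨hy, hyx⟩, hp⟩
  replace hyx : y ≠ x := hyx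
  have hx : x ∈ Metric.ball x δ := Metric.mem_ball_self hδ
  have hosc : ∀ z ∈ Metric.ball x δ, ‖f' p z - f' p x‖ ≤ ε / 2 := fun z hz => by
    rw [← dist_eq_norm]
    linarith [dist_triangle_right (f' p z) (f' p x) (f' p₀ x), (hUV hp (hball z hz)).2,
      (hUV hp (hball x hx)).2]
  have hmean : ‖f p y - y • f' p x - (f p x - x • f' p x)‖ ≤ ε / 2 * ‖y - x‖ :=
    (convex_ball x δ).norm_image_sub_le_of_norm_hasDerivWithin_le
      (f := fun z => f p z - z • f' p x) (f' := fun z => f' p z - f' p x)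
      (fun z hz => (((hUV hp (hball z hz)).1.sub
        ((hasDerivAt_id z).smul_const (f' p x))).congr_deriv (by simp)).hasDerivWithinAt) hosc hx hy
  have hslope : slope (f p) x y - f' p x =
      (y - x)⁻¹ • (f p y - y • f' p x - (f p x - x • f' p x)) := by
    rw [slope_def_module, sub_sub_sub_comm, ← sub_smul, smul_sub _ (f p y - f p x),
      inv_smul_smul₀ (sub_ne_zero.2 hyx)]
  have hpos : 0 < ‖y - x‖ := norm_pos_iff.2 (sub_ne_zero.2 hyx)
  rw [dist_comm, dist_eq_norm, hslope, norm_smul, norm_inv, inv_mul_lt_iff₀ hpos]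
  nlinarith

theorem hasDerivAt_partialDeriv_of_continuousAt {f f₁ f₁₂ : 𝕜 → 𝕜 → E} {f₂ : 𝕜 → E} {t x : 𝕜}
    (hf₁ : ∀ᶠ q in 𝓝 t ×ˢ 𝓝 x, HasDerivAt (fun s => f s q.2) (f₁ q.1 q.2) q.1)
    (hf₂ : ∀ᶠ s in 𝓝 t, HasDerivAt (f s) (f₂ s) x)
    (hf₁₂ : ∀ᶠ q in 𝓝 t ×ˢ 𝓝 x, HasDerivAt (f₁ q.1) (f₁₂ q.1 q.2) q.2)
    (hcont : ContinuousAt (fun q : 𝕜 × 𝕜 => f₁₂ q.1 q.2) (t, x)) :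
    HasDerivAt f₂ (f₁₂ t x) t := by
  refine hasDerivAt_of_tendstoUniformlyOnFilter (f := fun y s => slope (f s) x y)
    (tendstoUniformlyOnFilter_slope hf₁₂ hcont) ?_
    (hf₂.mono fun s hs => hasDerivAt_iff_tendsto_slope.1 hs)
  have hf₁_swap : ∀ᶠ n in 𝓝[≠] x ×ˢ 𝓝 t, HasDerivAt (fun s => f s n.1) (f₁ n.2 n.1) n.2 :=
    (eventually_swap_iff.1 hf₁).filter_mono (prod_mono_left _ nhdsWithin_le_nhds)
  have hf₁_base : ∀ᶠ s in 𝓝 t, HasDerivAt (fun s => f s x) (f₁ s x) s :=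
    (hf₁.curry.mono fun s hs => hs.self_of_nhds)
  filter_upwards [hf₁_swap, hf₁_base.prod_inr _] with n hn hbase
  simp only [slope_def_module]
  exact (hn.sub hbase).const_smul (n.1 - x)⁻¹

end Calculus

section Integral

variable {E : Type*} [NormedAddCommGroup E] [NormedSpace ℝ E]

theorem hasDerivAt_intervalIntegral_of_continuousOn {F F' : ℝ → ℝ → E} {S : Set ℝ} {a b t : ℝ}
    (hS : S ∈ 𝓝 t) (hF : ∀ s ∈ S, ContinuousOn (F s) (uIcc a b))
    (hF' : ContinuousOn (fun p : ℝ × ℝ => F' p.1 p.2) (S ×ˢ uIcc a b))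
    (hderiv : ∀ s ∈ S, ∀ x ∈ uIcc a b, HasDerivAt (fun r => F r x) (F' s x) s) :
    HasDerivAt (fun s => ∫ x in a..b, F s x) (∫ x in a..b, F' t x) t := by
  obtain ⟨δ, hδ, hball⟩ := Metric.nhds_basis_closedBall.mem_iff.1 hS
  have hbox : IsCompact (Metric.closedBall t δ ×ˢ uIcc a b) :=
    (isCompact_closedBall t δ).prod isCompact_uIcc
  obtain ⟨C, hC⟩ := hbox.exists_bound_of_continuousOn (hF'.mono (prod_mono_left hball))
  have hF'_slice : ContinuousOn (F' t) (uIcc a b) :=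
    hF'.comp (f := fun x => (t, x)) (by fun_prop) fun x hx => ⟨mem_of_mem_nhds hS, hx⟩
  exact (intervalIntegral.hasDerivAt_integral_of_dominated_loc_of_deriv_le (bound := fun _ => C)
    (Metric.closedBall_mem_nhds t hδ)
    (mem_of_superset hS fun s hs => ((hF s hs).mono uIoc_subset_uIcc).aestronglyMeasurable
      measurableSet_uIoc)
    (hF t (mem_of_mem_nhds hS)).intervalIntegrable
    ((hF'_slice.mono uIoc_subset_uIcc).aestronglyMeasurable measurableSet_uIoc)
    (.of_forall fun x hx s hs => hC (s, x) ⟨hs, uIoc_subset_uIcc hx⟩)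
    intervalIntegrable_const
    (.of_forall fun x hx s hs => hderiv s (hball hs) x (uIoc_subset_uIcc hx))).2

theorem norm_le_of_periodic_of_integral_eq_zero [CompleteSpace E] {f f' : ℝ → E} {c C : ℝ}
    (hper : Function.Periodic f c) (hc : 0 < c) (hf : ∀ x, HasDerivAt f (f' x) x)
    (hf' : ∀ x, ‖f' x‖ ≤ C) (hint : ∫ x in 0..c, f x = 0) (x : ℝ) : ‖f x‖ ≤ C * c := by
  have hcont : Continuous f := continuous_iff_continuousAt.2 fun y => (hf y).continuousAt
  have hC : 0 ≤ C := (norm_nonneg _).trans (hf' x)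
  have hosc : ∀ y ∈ uIoc x (x + c), ‖f x - f y‖ ≤ C * c := by
    intro y hy
    rw [uIoc_of_le (by linarith)] at hy
    calc ‖f x - f y‖ ≤ C * ‖x - y‖ :=
          convex_univ.norm_image_sub_le_of_norm_hasDerivWithin_le
            (fun z _ => (hf z).hasDerivWithinAt) (fun z _ => hf' z) (mem_univ y) (mem_univ x)
      _ ≤ C * c := by
          gcongr
          rw [Real.norm_eq_abs, abs_le]
          constructor <;> linarith [hy.1, hy.2]
  have haverage : ∫ y in x..x + c, (f x - f y) = c • f x := by
    rw [intervalIntegral.integral_sub intervalIntegrable_const (hcont.intervalIntegrable _ _),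
      hper.intervalIntegral_add_eq x 0, zero_add, hint, intervalIntegral.integral_const,
      add_sub_cancel_left, sub_zero]
  have hbound := norm_integral_le_of_norm_le_const hosc
  rw [haverage, norm_smul, add_sub_cancel_left, ← Real.norm_eq_abs, mul_comm] at hbound
  exact le_of_mul_le_mul_right hbound (norm_pos_iff.2 hc.ne')

end Integral

section Periodic

theorem periodic_deriv {𝕜 E : Type*} [NontriviallyNormedField 𝕜] [NormedAddCommGroup E]
    [NormedSpace 𝕜 E] {f : 𝕜 → E} {c : 𝕜} (hf : Function.Periodic f c) :
    Function.Periodic (deriv f) c := fun x => by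
  rw [← deriv_comp_add_const, funext hf]

variable {G β : Type*} [AddCommGroup G] [LinearOrder G] [IsOrderedAddMonoid G] [Archimedean G]
  {f : G → β} {c : G}

theorem forall_of_forall_mem_Icc_of_periodic (hf : Function.Periodic f c) (hc : 0 < c)
    {p : β → Prop} (h : ∀ x : Icc 0 c, p (f x)) (x : G) : p (f x) := by
  obtain ⟨y, hy, hxy⟩ := hf.exists_mem_Ico₀ hc x
  exact hxy ▸ h ⟨y, Ico_subset_Icc_self hy⟩

theorem iInf_Icc_eq_iInf_of_periodic [InfSet β] (hf : Function.Periodic f c) (hc : 0 < c) :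
    ⨅ x : Icc 0 c, f x = ⨅ x, f x := by
  rw [← sInf_image', ← sInf_range, ← hf.image_Icc hc 0, zero_add]

end Periodic

section MaximumPrinciple

variable {X : Type*} [TopologicalSpace X] [CompactSpace X] {g f : ℝ → X → ℝ} {a b : ℝ}

theorem exists_first_zero_of_neg_of_nonneg
    (hg : ContinuousOn (fun p : ℝ × X => g p.1 p.2) (Icc a b ×ˢ univ)) (ha : ∀ x, g a x < 0)
    (h : ∃ t ∈ Icc a b, ∃ x, 0 ≤ g t x) :
    ∃ t ∈ Ioc a b, ∃ x, g t x = 0 ∧ ∀ s ∈ Icc a t, ∀ y, g s y ≤ 0 := by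
  have hcompact : IsCompact ((Icc a b ×ˢ univ) ∩ {p : ℝ × X | 0 ≤ g p.1 p.2}) := by
    have hbox : IsCompact (Icc a b ×ˢ (univ : Set X)) := isCompact_Icc.prod isCompact_univ
    obtain ⟨C, hC, hCeq⟩ := continuousOn_iff_isClosed.1 hg (Ici 0) isClosed_Ici
    have : (Icc a b ×ˢ univ) ∩ {p : ℝ × X | 0 ≤ g p.1 p.2} = (Icc a b ×ˢ univ) ∩ C := by
      rw [inter_comm, inter_comm _ C, ← hCeq]
      rfl
    exact this ▸ hbox.inter_right hC
  obtain ⟨t₁, ht₁, x₁, hx₁⟩ := h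
  obtain ⟨⟨t, x⟩, ⟨⟨ht, -⟩, hx⟩, hfirst⟩ :=
    hcompact.exists_isMinOn ⟨(t₁, x₁), ⟨ht₁, mem_univ _⟩, hx₁⟩ continuous_fst.continuousOn
  replace ht : t ∈ Icc a b := ht
  replace hx : 0 ≤ g t x := hx
  have hat : a < t := ht.1.lt_of_ne fun h => (ha x).not_ge (h ▸ hx)
  have hbefore : ∀ s ∈ Ico a t, ∀ y, g s y < 0 := fun s hs y => by
    by_contra! hy
    exact hs.2.not_ge (hfirst (a := (s, y)) ⟨⟨⟨hs.1, hs.2.le.trans ht.2⟩, mem_univ _⟩, hy⟩)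
  have hat_first : ∀ y, g t y ≤ 0 := fun y => by
    have hslice : ContinuousOn (fun s => g s y) (Icc a b) :=
      hg.comp (f := fun s => (s, y)) (by fun_prop) fun s hs => ⟨hs, mem_univ _⟩
    have hlim : Tendsto (fun s => g s y) (𝓝[<] t) (𝓝 (g t y)) := by
      rw [← nhdsWithin_Ico_eq_nhdsLT hat]
      exact (hslice t ht).mono_left
        (nhdsWithin_mono _ fun s hs => ⟨hs.1, hs.2.le.trans ht.2⟩)
    exact le_of_tendsto hlim
      (mem_of_superset (Ico_mem_nhdsLT hat) fun s hs => (hbefore s hs y).le)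
  refine ⟨t, ⟨hat, ht.2⟩, x, (hat_first x).antisymm hx, fun s hs y => ?_⟩
  rcases hs.2.eq_or_lt with rfl | hst
  · exact hat_first y
  · exact (hbefore s ⟨hs.1, hst⟩ y).le

theorem forall_neg_of_deriv_neg_at_zero_max
    (hg : ContinuousOn (fun p : ℝ × X => g p.1 p.2) (Icc a b ×ˢ univ)) (ha : ∀ x, g a x < 0)
    (hd : ∀ t ∈ Ioc a b, ∀ x, g t x = 0 → (∀ y, g t y ≤ 0) →
      ∃ d < 0, HasDerivWithinAt (fun s => g s x) d (Iio t) t) :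
    ∀ t ∈ Icc a b, ∀ x, g t x < 0 := by
  by_contra! hcon
  obtain ⟨t, ht, x, hx, hle⟩ := exists_first_zero_of_neg_of_nonneg hg ha hcon
  obtain ⟨d, hd_neg, hderiv⟩ := hd t ht x hx (hle t ⟨ht.1.le, le_rfl⟩)
  rw [hasDerivWithinAt_iff_tendsto_slope' self_notMem_Iio] at hderiv
  refine hd_neg.not_ge (ge_of_tendsto hderiv ?_)
  filter_upwards [Ioo_mem_nhdsLT ht.1] with s hs
  rw [slope_def_field, hx, sub_zero]
  exact div_nonneg_of_nonpos (hle s ⟨hs.1.le, hs.2.le⟩ x) (sub_nonpos.2 hs.2.le)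

theorem forall_neg_of_deriv_pos_at_zero_max
    (hg : ContinuousOn (fun p : ℝ × X => g p.1 p.2) (Icc a b ×ˢ univ)) (hb : ∀ x, g b x < 0)
    (hd : ∀ t ∈ Ico a b, ∀ x, g t x = 0 → (∀ y, g t y ≤ 0) →
      ∃ d > 0, HasDerivWithinAt (fun s => g s x) d (Ioi t) t) :
    ∀ t ∈ Icc a b, ∀ x, g t x < 0 := by
  have hreflect : ∀ s ∈ Icc (-b) (-a), ∀ x, g (-s) x < 0 := by
    refine forall_neg_of_deriv_neg_at_zero_max (g := fun s x => g (-s) x)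
      (hg.comp (f := fun p : ℝ × X => (-p.1, p.2)) (by fun_prop) ?_) (by simpa using hb) ?_
    · exact fun p hp => ⟨⟨le_neg.1 hp.1.2, neg_le.1 hp.1.1⟩, mem_univ _⟩
    · intro s hs x hzero hmax
      obtain ⟨d, hd_pos, hderiv⟩ := hd (-s) ⟨le_neg.1 hs.2, neg_lt.1 hs.1⟩ x hzero hmax
      refine ⟨d * -1, by linarith, ?_⟩
      exact hderiv.comp s (hasDerivAt_neg s).hasDerivWithinAt fun r hr => neg_lt_neg (mem_Iio.1 hr)
  exact fun t ht x => by simpa using hreflect (-t) ⟨neg_le_neg ht.2, neg_le_neg ht.1⟩ x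

theorem abs_lt_of_abs_deriv_lt_at_max {ρ ρ' : ℝ → ℝ}
    (hf : ContinuousOn (fun p : ℝ × X => f p.1 p.2) (Icc a b ×ˢ univ))
    (hρ_pos : ∀ t ∈ Icc a b, 0 < ρ t) (hρ : ∀ t ∈ Icc a b, HasDerivAt ρ (ρ' t) t)
    (ha : ∀ x, |f a x| < ρ a)
    (hd : ∀ t ∈ Ioc a b, ∀ x, |f t x| = ρ t → (∀ y, |f t y| ≤ |f t x|) →
      ∃ d, HasDerivWithinAt (fun s => f s x) d (Iio t) t ∧ |d| < ρ' t) :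
    ∀ t ∈ Icc a b, ∀ x, |f t x| < ρ t := by
  intro t ht x
  have hneg : ∀ t ∈ Icc a b, ∀ x, f t x ^ 2 - ρ t ^ 2 < 0 := by
    refine forall_neg_of_deriv_neg_at_zero_max ((hf.pow 2).sub ?_) (fun y => ?_) ?_
    · have hρ_cont : ContinuousOn ρ (Icc a b) := fun s hs =>
        (hρ s hs).continuousAt.continuousWithinAt
      exact (hρ_cont.comp continuousOn_fst fun p hp => hp.1).pow 2
    · rw [sub_neg]
      exact sq_lt_sq.2 ((ha y).trans_le (le_abs_self _))
    · intro s hs y hzero hmax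
      have hs' : s ∈ Icc a b := Ioc_subset_Icc_self hs
      have hsq : f s y ^ 2 = ρ s ^ 2 := sub_eq_zero.1 hzero
      have habs : |f s y| = ρ s := by
        rw [← abs_of_pos (hρ_pos s hs'), (sq_eq_sq_iff_abs_eq_abs _ _).1 hsq]
      obtain ⟨d, hderiv, hd_lt⟩ := hd s hs y habs fun z =>
        sq_le_sq.1 (hsq ▸ sub_nonpos.1 (hmax z))
      refine ⟨2 * (f s y * d) - 2 * (ρ s * ρ' s), ?_, ?_⟩
      · have : f s y * d < ρ s * ρ' s := by
          calc f s y * d ≤ |f s y| * |d| := (le_abs_self _).trans (abs_mul _ _).le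
            _ < ρ s * ρ' s := habs ▸ mul_lt_mul_of_pos_left hd_lt (habs ▸ hρ_pos s hs')
        linarith
      · refine ((hderiv.pow 2).sub ((hρ s hs').hasDerivWithinAt.pow 2)).congr_deriv ?_
        ring
  have := sq_lt_sq.1 (sub_neg.1 (hneg t ht x))
  rwa [abs_of_pos (hρ_pos t ht)] at this

theorem abs_le_mul_exp_of_abs_deriv_le_at_max {C L : ℝ}
    (hf : ContinuousOn (fun p : ℝ × X => f p.1 p.2) (Icc a b ×ˢ univ)) (ha : ∀ x, |f a x| ≤ C)
    (hd : ∀ t ∈ Ioc a b, ∀ x, (∀ y, |f t y| ≤ |f t x|) →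
      ∃ d, HasDerivWithinAt (fun s => f s x) d (Iio t) t ∧ |d| ≤ L * |f t x|) :
    ∀ t ∈ Icc a b, ∀ x, |f t x| ≤ C * Real.exp (L * (t - a)) := by
  intro t ht x
  have hC : 0 ≤ C := (abs_nonneg _).trans (ha x)
  have hperturbed : ∀ ε > 0, |f t x| < (C + ε) * Real.exp ((L + ε) * (t - a)) := by
    intro ε hε
    let ρ : ℝ → ℝ := fun s => (C + ε) * Real.exp ((L + ε) * (s - a))
    have hρ_pos : ∀ s, 0 < ρ s := fun s => by positivity
    have hρ : ∀ s, HasDerivAt ρ ((L + ε) * ρ s) s := fun s => by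
      refine (((((hasDerivAt_id s).sub_const a).const_mul (L + ε)).exp).const_mul
        (C + ε)).congr_deriv ?_
      simp only [ρ, id]
      ring
    refine abs_lt_of_abs_deriv_lt_at_max hf (fun s _ => hρ_pos s) (fun s _ => hρ s)
      (fun y => ?_) (fun s hs y heq hmax => ?_) t ht x
    · simpa [ρ] using (ha y).trans_lt (lt_add_of_pos_right C hε)
    · obtain ⟨d, hderiv, hd_le⟩ := hd s hs y hmax
      rw [heq] at hd_le
      exact ⟨d, hderiv, by linarith [mul_pos hε (hρ_pos s)]⟩
  have hlim : Tendsto (fun ε => (C + ε) * Real.exp ((L + ε) * (t - a))) (𝓝[>] 0)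
      (𝓝 ((C + 0) * Real.exp ((L + 0) * (t - a)))) :=
    (Continuous.tendsto (by fun_prop) 0).mono_left nhdsWithin_le_nhds
  simpa only [add_zero] using
    ge_of_tendsto hlim (eventually_nhdsWithin_of_forall fun ε hε => (hperturbed ε hε).le)

end MaximumPrinciple

section Riccati

/-- The solution `ψ` of `ψ' = -k ψ²` that tends to `-∞` as time increases to `τ`. For `k ≠ 1` it
is compared with solutions of `v' = -v² + O(1)`: once `ψ²` is large, the bounded term is absorbed
by `(1 - k) ψ²`. -/
noncomputable def riccatiBarrier (k τ t : ℝ) : ℝ :=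
  -(k * (τ - t))⁻¹

/-- At each of its spatial minima, `v` satisfies the Riccati equation `∂ₜ v = -v²` up to an error
of size at most `N`, at all times in `S`. -/
def IsApproxRiccatiAtMin {X : Type*} (v : ℝ → X → ℝ) (N : ℝ) (S : Set ℝ) : Prop :=
  ∀ t ∈ S, ∀ x, (∀ y, v t x ≤ v t y) → ∃ d, HasDerivAt (fun s => v s x) d t ∧ |d + v t x ^ 2| ≤ N

variable {k τ a b t T t₀ N c : ℝ}

theorem riccatiBarrier_neg (hk : 0 < k) (ht : t < τ) : riccatiBarrier k τ t < 0 :=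
  neg_neg_of_pos (inv_pos.2 (mul_pos hk (sub_pos.2 ht)))

theorem riccatiBarrier_anti (hk : 0 < k) (hab : a ≤ b) (hb : b < τ) :
    riccatiBarrier k τ b ≤ riccatiBarrier k τ a := by
  have : 0 < τ - b := sub_pos.2 hb
  unfold riccatiBarrier
  gcongr

theorem hasDerivAt_riccatiBarrier (hk : k ≠ 0) (ht : t ≠ τ) :
    HasDerivAt (riccatiBarrier k τ) (-k * riccatiBarrier k τ t ^ 2) t := by
  have hne : k * (τ - t) ≠ 0 := mul_ne_zero hk (sub_ne_zero.2 ht.symm)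
  have hlin : HasDerivAt (fun s => k * (τ - s)) (k * (-1)) t :=
    ((hasDerivAt_id t).const_sub τ).const_mul k
  refine (hlin.inv hne).neg.congr_deriv ?_
  rw [riccatiBarrier]
  field_simp

theorem continuousOn_riccatiBarrier (hk : k ≠ 0) : ContinuousOn (riccatiBarrier k τ) {τ}ᶜ :=
  fun _ ht => (hasDerivAt_riccatiBarrier hk ht).continuousAt.continuousWithinAt

theorem continuousAt_riccatiBarrier_blowupTime (hk : k ≠ 0) (ht : t ≠ T) :
    ContinuousAt (fun τ => riccatiBarrier k τ t) T := by
  have hne : k * (T - t) ≠ 0 := mul_ne_zero hk (sub_ne_zero.2 ht.symm)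
  unfold riccatiBarrier
  fun_prop (disch := assumption)

theorem sub_mul_riccatiBarrier (ht : t ≠ τ) : (τ - t) * riccatiBarrier k τ t = -k⁻¹ := by
  rw [riccatiBarrier, mul_neg, mul_inv_rev, mul_inv_cancel_left₀ (sub_ne_zero.2 ht.symm)]

theorem tendsto_riccatiBarrier_atBot (hk : 0 < k) :
    Tendsto (riccatiBarrier k τ) (𝓝[<] τ) atBot := by
  refine tendsto_neg_atTop_atBot.comp (tendsto_inv_nhdsGT_zero.comp
    (tendsto_nhdsWithin_iff.2 ⟨?_, eventually_nhdsWithin_of_forall fun t ht =>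
      mul_pos hk (sub_pos.2 ht)⟩))
  have : Tendsto (fun t => k * (τ - t)) (𝓝 τ) (𝓝 (k * (τ - τ))) :=
    Continuous.tendsto (by fun_prop) τ
  rw [sub_self, mul_zero] at this
  exact this.mono_left nhdsWithin_le_nhds

theorem eventually_lt_mul_riccatiBarrier_sq (hk : 0 < k) (hc : 0 < c) :
    ∀ᶠ t in 𝓝[<] τ, N < c * riccatiBarrier k τ t ^ 2 := by
  have hψ := tendsto_riccatiBarrier_atBot (τ := τ) hk
  filter_upwards [((hψ.atBot_mul_atBot₀ hψ).const_mul_atTop hc).eventually_gt_atTop N] with t ht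
  rwa [sq]

theorem lt_mul_riccatiBarrier_sq_of_le (hk : 0 < k) (hc : 0 ≤ c) (hab : a ≤ b) (hb : b < τ)
    (hN : N < c * riccatiBarrier k τ a ^ 2) : N < c * riccatiBarrier k τ b ^ 2 := by
  have hanti : riccatiBarrier k τ b ≤ riccatiBarrier k τ a := riccatiBarrier_anti hk hab hb
  have hneg : riccatiBarrier k τ a < 0 := riccatiBarrier_neg hk (hab.trans_lt hb)
  have hsq : riccatiBarrier k τ a ^ 2 ≤ riccatiBarrier k τ b ^ 2 := by nlinarith
  exact hN.trans_le (mul_le_mul_of_nonneg_left hsq hc)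

variable {X : Type*} [TopologicalSpace X] {v : ℝ → X → ℝ}

theorem continuousOn_riccatiBarrier_sub
    (hv : ContinuousOn (fun p : ℝ × X => v p.1 p.2) (Icc a b ×ˢ univ)) (hk : k ≠ 0) (hb : b < τ) :
    ContinuousOn (fun p : ℝ × X => riccatiBarrier k τ p.1 - v p.1 p.2) (Icc a b ×ˢ univ) :=
  ((continuousOn_riccatiBarrier hk).comp continuousOn_fst
    fun _ hp => (hp.1.2.trans_lt hb).ne).sub hv

variable [CompactSpace X]

theorem riccatiBarrier_lt_of_isApproxRiccatiAtMin
    (hv : ContinuousOn (fun p : ℝ × X => v p.1 p.2) (Icc a b ×ˢ univ))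
    (hR : IsApproxRiccatiAtMin v N (Icc a b)) (hk : 1 < k) (hb : b < τ)
    (hN : N < (k - 1) * riccatiBarrier k τ a ^ 2) (ha : ∀ x, riccatiBarrier k τ a < v a x) :
    ∀ t ∈ Icc a b, ∀ x, riccatiBarrier k τ t < v t x := by
  have hk₀ : 0 < k := one_pos.trans hk
  have hneg : ∀ t ∈ Icc a b, ∀ x, riccatiBarrier k τ t - v t x < 0 := by
    refine forall_neg_of_deriv_neg_at_zero_max (continuousOn_riccatiBarrier_sub hv hk₀.ne' hb)
      (fun x => sub_neg.2 (ha x)) fun t ht x hzero hmax => ?_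
    have htτ : t < τ := ht.2.trans_lt hb
    obtain ⟨d, hderiv, hd⟩ := hR t (Ioc_subset_Icc_self ht) x fun y => by
      linarith [hmax y]
    refine ⟨_, ?_,
      ((hasDerivAt_riccatiBarrier hk₀.ne' htτ.ne).sub hderiv).hasDerivWithinAt⟩
    have hsmall := lt_mul_riccatiBarrier_sq_of_le hk₀ (sub_nonneg.2 hk.le) ht.1.le htτ hN
    rw [← sub_eq_zero.1 hzero] at hd
    linarith [(abs_le.1 hd).1]
  exact fun t ht x => sub_neg.1 (hneg t ht x)

theorem exists_le_riccatiBarrier_of_isApproxRiccatiAtMin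
    (hv : ContinuousOn (fun p : ℝ × X => v p.1 p.2) (Icc a b ×ˢ univ))
    (hR : IsApproxRiccatiAtMin v N (Icc a b)) (hk : k ∈ Ioo 0 1) (hab : a ≤ b) (hb : b < τ)
    (hN : N < (1 - k) * riccatiBarrier k τ a ^ 2) (ha : ∃ x, v a x ≤ riccatiBarrier k τ a) :
    ∃ x, v b x ≤ riccatiBarrier k τ b := by
  by_contra! hcon
  obtain ⟨x, hx⟩ := ha
  suffices hneg : ∀ t ∈ Icc a b, ∀ x, riccatiBarrier k τ t - v t x < 0 from
    hx.not_gt (sub_neg.1 (hneg a (left_mem_Icc.2 hab) x))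
  refine forall_neg_of_deriv_pos_at_zero_max (continuousOn_riccatiBarrier_sub hv hk.1.ne' hb)
    (fun y => sub_neg.2 (hcon y)) fun t ht y hzero hmax => ?_
  have htτ : t < τ := ht.2.trans hb
  obtain ⟨d, hderiv, hd⟩ := hR t (Ico_subset_Icc_self ht) y fun z => by
    linarith [hmax z]
  refine ⟨_, ?_,
    ((hasDerivAt_riccatiBarrier hk.1.ne' htτ.ne).sub hderiv).hasDerivWithinAt⟩
  have hsmall := lt_mul_riccatiBarrier_sq_of_le hk.1 (sub_nonneg.2 hk.2.le) ht.1 htτ hN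
  rw [← sub_eq_zero.1 hzero] at hd
  linarith [(abs_le.1 hd).2]

theorem eventually_riccatiBarrier_le
    (hv : ContinuousOn (fun p : ℝ × X => v p.1 p.2) (Ioo t₀ T ×ˢ univ))
    (hR : IsApproxRiccatiAtMin v N (Ioo t₀ T)) (ht₀ : t₀ < T) (hk : k ∈ Ioo 0 1) :
    ∀ᶠ t in 𝓝[<] T, ∀ x, riccatiBarrier k T t ≤ v t x := by
  filter_upwards [Ioo_mem_nhdsLT ht₀,
    eventually_lt_mul_riccatiBarrier_sq (N := N) hk.1 (sub_pos.2 hk.2)] with t ht hN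
  -- A point below the barrier is also below one that reaches `-∞` at some `τ < T`, and that barrier
  -- would drag `v` to `-∞` by then.
  by_contra! hcon
  obtain ⟨x, hx⟩ := hcon
  have hψ : ContinuousAt (fun τ => riccatiBarrier k τ t) T :=
    continuousAt_riccatiBarrier_blowupTime hk.1.ne' ht.2.ne
  have hevent : ∀ᶠ τ in 𝓝[<] T, (v t x < riccatiBarrier k τ t ∧
      N < (1 - k) * riccatiBarrier k τ t ^ 2) ∧ τ ∈ Ioo t T :=
    (((hψ.eventually_const_lt hx).and
      (((hψ.pow 2).const_mul (1 - k)).eventually_const_lt hN)).filter_mono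
        nhdsWithin_le_nhds).and (Ioo_mem_nhdsLT ht.2)
  obtain ⟨τ, ⟨hxτ, hNτ⟩, hτ⟩ := hevent.exists
  have hsub : Icc t τ ⊆ Ioo t₀ T := fun s hs => ⟨ht.1.trans_le hs.1, hs.2.trans_lt hτ.2⟩
  have hbox : IsCompact (Icc t τ ×ˢ (univ : Set X)) := isCompact_Icc.prod isCompact_univ
  obtain ⟨C, hC⟩ := hbox.exists_bound_of_continuousOn (hv.mono (prod_mono_left hsub))
  obtain ⟨b, hbC, hb⟩ := (((tendsto_riccatiBarrier_atBot hk.1).eventually_lt_atBot (-C)).and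
    (Ioo_mem_nhdsLT hτ.1)).exists
  have hsub_b : Icc t b ⊆ Ioo t₀ T := (Icc_subset_Icc_right hb.2.le).trans hsub
  obtain ⟨y, hy⟩ := exists_le_riccatiBarrier_of_isApproxRiccatiAtMin
    (hv.mono (prod_mono_left hsub_b)) (fun s hs => hR s (hsub_b hs)) hk hb.1.le hb.2 hNτ
    ⟨x, hxτ.le⟩
  linarith [(abs_le.1 (hC (b, y) ⟨⟨hb.1.le, hb.2.le⟩, mem_univ y⟩)).1]

theorem eventually_exists_le_riccatiBarrier [Nonempty X]
    (hv : ContinuousOn (fun p : ℝ × X => v p.1 p.2) (Ioo t₀ T ×ˢ univ))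
    (hR : IsApproxRiccatiAtMin v N (Ioo t₀ T)) (ht₀ : t₀ < T) (hk : 1 < k)
    (hblow : ¬ IsBoundedUnder (· ≥ ·) (𝓝[<] T) fun t => ⨅ x, v t x) :
    ∀ᶠ t in 𝓝[<] T, ∃ x, v t x ≤ riccatiBarrier k T t := by
  have hk₀ : 0 < k := one_pos.trans hk
  filter_upwards [Ioo_mem_nhdsLT ht₀,
    eventually_lt_mul_riccatiBarrier_sq (N := N) hk₀ (sub_pos.2 hk)] with t ht hN
  -- If `v t` lies above the barrier, it also lies above one that reaches `-∞` only at some `τ > T`,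
  -- and `v` stays bounded below up to time `T`.
  by_contra! hcon
  have hslice : Continuous (v t) :=
    hv.comp_continuous (f := fun x => (t, x)) (by fun_prop) fun x => ⟨ht, mem_univ x⟩
  obtain ⟨x, -, hx⟩ := isCompact_univ.exists_isMinOn univ_nonempty hslice.continuousOn
  have hψ : ContinuousAt (fun τ => riccatiBarrier k τ t) T :=
    continuousAt_riccatiBarrier_blowupTime hk₀.ne' ht.2.ne
  have hevent : ∀ᶠ τ in 𝓝[>] T, (riccatiBarrier k τ t < v t x ∧
      N < (k - 1) * riccatiBarrier k τ t ^ 2) ∧ T < τ :=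
    (((hψ.eventually_lt_const (hcon x)).and
      (((hψ.pow 2).const_mul (k - 1)).eventually_const_lt hN)).filter_mono
        nhdsWithin_le_nhds).and self_mem_nhdsWithin
  obtain ⟨τ, ⟨hxτ, hNτ⟩, hτ⟩ := hevent.exists
  refine hblow ⟨riccatiBarrier k τ T, eventually_map.2 ?_⟩
  filter_upwards [Ico_mem_nhdsLT ht.2] with s hs
  have hsub : Icc t s ⊆ Ioo t₀ T := fun r hr => ⟨ht.1.trans_le hr.1, hr.2.trans_lt hs.2⟩
  refine le_ciInf fun y => (riccatiBarrier_anti hk₀ hs.2.le hτ).trans ?_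
  exact (riccatiBarrier_lt_of_isApproxRiccatiAtMin (hv.mono (prod_mono_left hsub))
    (fun r hr => hR r (hsub hr)) hk (hs.2.trans hτ) hNτ
    (fun z => hxτ.trans_le (hx (mem_univ z))) s (right_mem_Icc.2 hs.1) y).le

theorem tendsto_sub_mul_iInf_of_isApproxRiccatiAtMin [Nonempty X]
    (hv : ContinuousOn (fun p : ℝ × X => v p.1 p.2) (Ioo t₀ T ×ˢ univ))
    (hR : IsApproxRiccatiAtMin v N (Ioo t₀ T)) (ht₀ : t₀ < T)
    (hblow : ¬ IsBoundedUnder (· ≥ ·) (𝓝[<] T) fun t => ⨅ x, v t x) :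
    Tendsto (fun t => (T - t) * ⨅ x, v t x) (𝓝[<] T) (𝓝 (-1)) := by
  have hrate : Tendsto (fun k : ℝ => -k⁻¹) (𝓝 1) (𝓝 (-1)) := by
    simpa using (tendsto_inv₀ (one_ne_zero (α := ℝ))).neg
  have hlower : ∀ k ∈ Ioo (0 : ℝ) 1, ∀ᶠ t in 𝓝[<] T, -k⁻¹ ≤ (T - t) * ⨅ x, v t x := by
    intro k hk
    filter_upwards [eventually_riccatiBarrier_le hv hR ht₀ hk, self_mem_nhdsWithin] with t hψ ht
    rw [← sub_mul_riccatiBarrier (ne_of_lt ht)]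
    exact mul_le_mul_of_nonneg_left (le_ciInf hψ) (sub_nonneg.2 (le_of_lt ht))
  have hupper : ∀ k : ℝ, 1 < k → ∀ᶠ t in 𝓝[<] T, (T - t) * ⨅ x, v t x ≤ -k⁻¹ := by
    intro k hk
    filter_upwards [eventually_exists_le_riccatiBarrier hv hR ht₀ hk hblow, self_mem_nhdsWithin,
      eventually_riccatiBarrier_le hv hR ht₀ (k := 2⁻¹) ⟨by norm_num, by norm_num⟩]
      with t hψ ht hbdd
    obtain ⟨x, hx⟩ := hψ
    rw [← sub_mul_riccatiBarrier (ne_of_lt ht)]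
    exact mul_le_mul_of_nonneg_left ((ciInf_le ⟨_, forall_mem_range.2 hbdd⟩ x).trans hx)
      (sub_nonneg.2 (le_of_lt ht))
  refine tendsto_order.2 ⟨fun r hr => ?_, fun r hr => ?_⟩
  · obtain ⟨k, hrk, hk⟩ := (((hrate.eventually_const_lt hr).filter_mono nhdsWithin_le_nhds).and
      (Ioo_mem_nhdsLT one_pos)).exists
    exact (hlower k hk).mono fun t ht => hrk.trans_le ht
  · obtain ⟨k, hkr, hk⟩ := (((hrate.eventually_lt_const hr).filter_mono nhdsWithin_le_nhds).and
      (self_mem_nhdsWithin (s := Ioi 1))).exists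
    exact (hupper k hk).mono fun t ht => ht.trans_lt hkr

end Riccati

/-- The derivative `u_t + u u_x` of `u` along its characteristics; the Ostrovsky–Hunter equation
says that its `x`-derivative is `γ u`. -/
noncomputable def materialDeriv (u : ℝ → ℝ → ℝ) (t x : ℝ) : ℝ :=
  deriv (fun s => u s x) t + u t x * deriv (u t) x

namespace IsPeriodicOHSolution

variable {γ t a b C N : ℝ} {S I : Set ℝ} {u : ℝ → ℝ → ℝ}

theorem continuous_slice (h : IsPeriodicOHSolution γ S u) (ht : t ∈ S) : Continuous (u t) :=
  Differentiable.continuous (h.diff_x t ht)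

theorem continuous_deriv_slice (h : IsPeriodicOHSolution γ S u) (ht : t ∈ S) :
    Continuous (deriv (u t)) :=
  Differentiable.continuous (h.diff_xx t ht)

theorem periodic_materialDeriv (h : IsPeriodicOHSolution γ S u) (hS : S ∈ 𝓝 t) :
    Function.Periodic (materialDeriv u t) 1 := fun x => by
  have ht : t ∈ S := mem_of_mem_nhds hS
  have hu_t : deriv (fun s => u s (x + 1)) t = deriv (fun s => u s x) t :=
    EventuallyEq.deriv_eq (mem_of_superset hS fun s hs => h.periodic s hs x)
  rw [materialDeriv, hu_t, h.periodic t ht, periodic_deriv (h.periodic t ht), materialDeriv]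

theorem hasDerivAt_materialDeriv (h : IsPeriodicOHSolution γ S u) (ht : t ∈ S) (ht₀ : 0 < t)
    (x : ℝ) : HasDerivAt (materialDeriv u t) (γ * u t x) x := by
  refine ((h.diff_tx t ht x).hasDerivAt.add
    ((h.diff_x t ht x).hasDerivAt.mul (h.diff_xx t ht x).hasDerivAt)).congr_deriv ?_
  rw [← h.eqn t ht ht₀ x]
  ring

theorem integral_eq_zero (h : IsPeriodicOHSolution γ S u) (hγ : γ ≠ 0) (hS : S ∈ 𝓝 t)
    (ht₀ : 0 < t) : ∫ x in 0..1, u t x = 0 := by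
  have ht : t ∈ S := mem_of_mem_nhds hS
  have hftc : ∫ x in 0..1, γ * u t x = materialDeriv u t 1 - materialDeriv u t 0 :=
    integral_eq_sub_of_hasDerivAt (fun x _ => h.hasDerivAt_materialDeriv ht ht₀ x)
      ((h.continuous_slice ht).const_mul γ |>.intervalIntegrable 0 1)
  rw [(h.periodic_materialDeriv hS).eq, sub_self, intervalIntegral.integral_const_mul] at hftc
  exact (mul_eq_zero.1 hftc).resolve_left hγ

theorem integral_deriv_time_eq_zero (h : IsPeriodicOHSolution γ S u) (hγ : γ ≠ 0) (hS : S ∈ 𝓝 t)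
    (ht₀ : 0 < t) : ∫ x in 0..1, deriv (fun s => u s x) t = 0 := by
  have hmean : (fun s => ∫ x in 0..1, u s x) =ᶠ[𝓝 t] fun _ => 0 := by
    filter_upwards [eventually_mem_nhds_iff.2 hS, lt_mem_nhds ht₀] with s hs hs₀
    exact h.integral_eq_zero hγ hs hs₀
  exact (hasDerivAt_intervalIntegral_of_continuousOn hS
    (fun s hs => (h.continuous_slice hs).continuousOn)
    (h.cont_ut.mono (prod_mono_right (subset_univ _)))
    (fun s hs x _ => (h.diff_t s hs x).hasDerivAt)).unique
      ((hasDerivAt_const t 0).congr_of_eventuallyEq hmean)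

theorem integral_mul_deriv_eq_zero (h : IsPeriodicOHSolution γ S u) (ht : t ∈ S) :
    ∫ x in 0..1, u t x * deriv (u t) x = 0 := by
  have hsq : ∀ x, HasDerivAt (fun y => u t y ^ 2 / 2) (u t x * deriv (u t) x) x := fun x =>
    (((h.diff_x t ht x).hasDerivAt.pow 2).div_const 2).congr_deriv (by ring)
  rw [integral_eq_sub_of_hasDerivAt (fun x _ => hsq x)
    (((h.continuous_slice ht).mul (h.continuous_deriv_slice ht)).intervalIntegrable 0 1),
    Function.Periodic.eq (h.periodic t ht), sub_self]

theorem integral_materialDeriv_eq_zero (h : IsPeriodicOHSolution γ S u) (hγ : γ ≠ 0)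
    (hS : S ∈ 𝓝 t) (ht₀ : 0 < t) : ∫ x in 0..1, materialDeriv u t x = 0 := by
  have ht : t ∈ S := mem_of_mem_nhds hS
  have hu_t : Continuous fun x => deriv (fun s => u s x) t :=
    Differentiable.continuous (h.diff_tx t ht)
  have hflux : Continuous fun x => u t x * deriv (u t) x :=
    (h.continuous_slice ht).mul (h.continuous_deriv_slice ht)
  unfold materialDeriv
  rw [intervalIntegral.integral_add (hu_t.intervalIntegrable 0 1) (hflux.intervalIntegrable 0 1),
    h.integral_deriv_time_eq_zero hγ hS ht₀, h.integral_mul_deriv_eq_zero ht, add_zero]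

theorem abs_materialDeriv_le (h : IsPeriodicOHSolution γ S u) (hγ : γ ≠ 0) (hS : S ∈ 𝓝 t)
    (ht₀ : 0 < t) (hC : ∀ x, |u t x| ≤ C) (x : ℝ) : |materialDeriv u t x| ≤ |γ| * C := by
  have hbound := norm_le_of_periodic_of_integral_eq_zero (h.periodic_materialDeriv hS) one_pos
    (h.hasDerivAt_materialDeriv (mem_of_mem_nhds hS) ht₀) (C := |γ| * C) (fun y => ?_)
    (h.integral_materialDeriv_eq_zero hγ hS ht₀) x
  · rwa [mul_one] at hbound
  · rw [Real.norm_eq_abs, abs_mul]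
    exact mul_le_mul_of_nonneg_left (hC y) (abs_nonneg γ)

theorem mul_deriv_eq_zero_of_forall_abs_le (h : IsPeriodicOHSolution γ S u) (ht : t ∈ S) {x : ℝ}
    (hx : ∀ y, |u t y| ≤ |u t x|) : u t x * deriv (u t) x = 0 := by
  have hmax : IsLocalMax (fun y => u t y ^ 2) x := .of_forall fun y => sq_le_sq.2 (hx y)
  have hcrit := hmax.hasDerivAt_eq_zero ((h.diff_x t ht x).hasDerivAt.pow 2)
  simpa using hcrit

theorem abs_le_mul_exp (h : IsPeriodicOHSolution γ S u) (hγ : γ ≠ 0) (ha₀ : 0 < a)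
    (hS : ∀ t ∈ Icc a b, S ∈ 𝓝 t) (ha : ∀ x, |u a x| ≤ C) :
    ∀ t ∈ Icc a b, ∀ x, |u t x| ≤ C * Real.exp (|γ| * (t - a)) := by
  intro t ht
  refine forall_of_forall_mem_Icc_of_periodic (p := fun y => |y| ≤ _)
    (h.periodic t (mem_of_mem_nhds (hS t ht))) one_pos ?_
  refine abs_le_mul_exp_of_abs_deriv_le_at_max (f := fun t (x : Icc (0 : ℝ) 1) => u t x)
    (h.cont_u.comp (f := fun p : ℝ × Icc (0 : ℝ) 1 => (p.1, (p.2 : ℝ))) (by fun_prop)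
      fun p hp => ⟨mem_of_mem_nhds (hS p.1 hp.1), mem_univ _⟩) (fun x => ha x) ?_ t ht
  intro s hs x hx
  have hSs : S ∈ 𝓝 s := hS s (Ioc_subset_Icc_self hs)
  have hsS : s ∈ S := mem_of_mem_nhds hSs
  have hmax : ∀ y, |u s y| ≤ |u s x| :=
    forall_of_forall_mem_Icc_of_periodic (p := fun y => |y| ≤ _) (h.periodic s hsS) one_pos hx
  refine ⟨_, (h.diff_t s hsS x).hasDerivAt.hasDerivWithinAt, ?_⟩
  have hbound := h.abs_materialDeriv_le hγ hSs (ha₀.trans hs.1) hmax x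
  rwa [materialDeriv, h.mul_deriv_eq_zero_of_forall_abs_le hsS hmax, add_zero] at hbound

theorem exists_abs_mul_le (h : IsPeriodicOHSolution γ S u) (ha₀ : 0 < a)
    (hS : ∀ t ∈ Ico a b, S ∈ 𝓝 t) : ∃ N, ∀ t ∈ Ico a b, ∀ x, |γ * u t x| ≤ N := by
  rcases eq_or_ne γ 0 with rfl | hγ
  · exact ⟨0, by simp⟩
  rcases le_or_gt b a with hab | hab
  · simp [Ico_eq_empty hab.not_gt]
  have haS : a ∈ S := mem_of_mem_nhds (hS a (left_mem_Ico.2 hab))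
  obtain ⟨C, hC⟩ := isCompact_Icc.exists_bound_of_continuousOn
    (h.continuous_slice haS).continuousOn (s := Icc 0 1)
  have ha : ∀ x, |u a x| ≤ C := forall_of_forall_mem_Icc_of_periodic (p := fun y => |y| ≤ _)
    (h.periodic a haS) one_pos fun x => hC x x.2
  refine ⟨|γ| * (C * Real.exp (|γ| * (b - a))), fun t ht x => ?_⟩
  have hC₀ : 0 ≤ C := (abs_nonneg _).trans (ha 0)
  rw [abs_mul]
  gcongr
  calc |u t x| ≤ C * Real.exp (|γ| * (t - a)) :=
        h.abs_le_mul_exp hγ ha₀ (fun s hs => hS s ⟨hs.1, hs.2.trans_lt ht.2⟩) ha t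
          ⟨ht.1, le_rfl⟩ x
    _ ≤ C * Real.exp (|γ| * (b - a)) := by
        gcongr
        exact ht.2.le

theorem hasDerivAt_deriv_time (h : IsPeriodicOHSolution γ S u) (hS : S ∈ 𝓝 t) (x : ℝ) :
    HasDerivAt (fun s => deriv (u s) x) (deriv (fun y => deriv (fun s => u s y) t) x) t :=
  have hS' : ∀ᶠ s in 𝓝 t, s ∈ S := hS
  hasDerivAt_partialDeriv_of_continuousAt
    (f₁ := fun s y => deriv (fun r => u r y) s)
    (f₁₂ := fun s y => deriv (fun z => deriv (fun r => u r z) s) y)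
    ((hS'.prod_inl _).mono fun q hq => (h.diff_t q.1 hq q.2).hasDerivAt)
    (hS'.mono fun s hs => (h.diff_x s hs x).hasDerivAt)
    ((hS'.prod_inl _).mono fun q hq => (h.diff_tx q.1 hq q.2).hasDerivAt)
    (h.cont_utx.continuousAt (prod_mem_nhds hS univ_mem))

theorem isApproxRiccatiAtMin (h : IsPeriodicOHSolution γ S u) (hI : ∀ t ∈ I, 0 < t)
    (hS : ∀ t ∈ I, S ∈ 𝓝 t) (hN : ∀ t ∈ I, ∀ x, |γ * u t x| ≤ N) :
    IsApproxRiccatiAtMin (fun t (x : Icc (0 : ℝ) 1) => deriv (u t) x) N I := by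
  intro t ht x hx
  have htS : t ∈ S := mem_of_mem_nhds (hS t ht)
  have hmin : IsLocalMin (deriv (u t)) x :=
    .of_forall (forall_of_forall_mem_Icc_of_periodic (p := fun y => deriv (u t) x ≤ y)
      (periodic_deriv (h.periodic t htS)) one_pos hx)
  have heqn := h.eqn t htS (hI t ht) x
  rw [hmin.deriv_eq_zero, mul_zero, add_zero] at heqn
  exact ⟨_, h.hasDerivAt_deriv_time (hS t ht) x, heqn ▸ hN t ht x⟩

end IsPeriodicOHSolution

theorem blowup_rate_inf_general (γ T : ℝ) (hT : 0 < T) (u : ℝ → ℝ → ℝ)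
    (hsol : IsPeriodicOHSolution γ (Ico 0 T) u)
    (hblow : ¬ IsBoundedUnder (· ≥ ·) (𝓝[<] T) fun t => ⨅ x, deriv (u t) x) :
    Tendsto (fun t => (T - t) * ⨅ x, deriv (u t) x) (𝓝[<] T) (𝓝 (-1)) := by
  have hpos : ∀ t ∈ Ioo (T / 2) T, 0 < t := fun t ht => (half_pos hT).trans ht.1
  have hnhds : ∀ t ∈ Ico (T / 2) T, Ico 0 T ∈ 𝓝 t := fun t ht =>
    Ico_mem_nhds ((half_pos hT).trans_le ht.1) ht.2
  have hsub : Ioo (T / 2) T ⊆ Ico 0 T := fun t ht => ⟨(hpos t ht).le, ht.2⟩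
  obtain ⟨N, hN⟩ := hsol.exists_abs_mul_le (half_pos hT) hnhds
  have hR := hsol.isApproxRiccatiAtMin hpos (fun t ht => hnhds t (Ioo_subset_Ico_self ht))
    fun t ht => hN t (Ioo_subset_Ico_self ht)
  have hcont : ContinuousOn (fun p : ℝ × Icc (0 : ℝ) 1 => deriv (u p.1) p.2)
      (Ioo (T / 2) T ×ˢ univ) :=
    hsol.cont_ux.comp (f := fun p : ℝ × Icc (0 : ℝ) 1 => (p.1, (p.2 : ℝ))) (by fun_prop)
      fun p hp => ⟨hsub hp.1, mem_univ _⟩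
  have hinf : (fun t => ⨅ x : Icc (0 : ℝ) 1, deriv (u t) x) =ᶠ[𝓝[<] T]
      fun t => ⨅ x, deriv (u t) x := by
    filter_upwards [Ico_mem_nhdsLT hT] with t ht
    exact iInf_Icc_eq_iInf_of_periodic (periodic_deriv (hsol.periodic t ht)) one_pos
  refine (tendsto_sub_mul_iInf_of_isApproxRiccatiAtMin hcont hR (half_lt_self hT)
    fun hbdd => hblow (by rwa [IsBoundedUnder, map_congr hinf] at hbdd)).congr' ?_
  exact hinf.mono fun t ht => congrArg ((T - t) * ·) ht

/-- blow-up rate: `(T-t)·inf_x u_x(t,x) → -1` as `t ↑ T`. -/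
theorem blowup_rate_inf
    (γ T : ℝ) (hγ : 0 < γ) (hT : 0 < T) (u₀ : ℝ → ℝ) (u : ℝ → ℝ → ℝ)
    (hsol : IsPeriodicOHSolution γ (Set.Ico 0 T) u) (h0 : u 0 = u₀)
    (hmean : (∫ x in (0:ℝ)..1, u₀ x) = 0)
    (hC3 : ∀ t ∈ Set.Ico (0 : ℝ) T, ContDiff ℝ 3 (u t))
    (hblow : Filter.Tendsto (fun t => ⨅ x : ℝ, deriv (u t) x)
      (nhdsWithin T (Set.Iio T)) Filter.atBot) :
    Filter.Tendsto (fun t => (T - t) * ⨅ x : ℝ, deriv (u t) x)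
      (nhdsWithin T (Set.Iio T)) (nhds (-1)) :=
  blowup_rate_inf_general γ T hT u hsol (not_isBoundedUnder_of_tendsto_atBot hblow)
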